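/- arXiv:2309.14695 — 3 statements merged into one kernel-verified Lean document; each statement's English description precedes it below -/
import Mathlib

section
/- Let φ, ψ, η be integrable on 𝕋, a ∈ ℂ, n ≥ 0, and suppose D_k[φ] ≠ 0 for 0 ≤ k ≤ n+1. Then ℋ_{n+2}[φ;ψ,η;a] / D_{n+1}[φ] = a − ∮_𝕋 ( ∮_𝕋 K_n(z₁^{-1}, z₂) · z₂^{−n} η(z₂) dz₂/(2πi z₂) ) ψ(z₁) dz₁/(2πi z₁). -/
/-!
Write `A_m` for the `m × m` Toeplitz matrix of `φ`. Expanding the bordered determinant `ℋ_{n+2}`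
along its Schur complement gives `ℋ_{n+2} / D_{n+1} = a - η' A_{n+1}⁻¹ ψ'`, where `ψ'` and `η'` are
the framing column and row (`det_eq_mul_schur`). It therefore suffices to see that
`K_n(z, w) = ∑_{k,i} w^k (A_{n+1}⁻¹)_{k i} z^i` (`repKernel_eq`): the Fourier coefficients of `η` and
`ψ` then come out of the two integrals term by term (`integral_sum_zpow`).

The formula for the kernel follows by induction on the size. When a matrix is enlarged by one row and
one column, the bilinear form `v A⁻¹ u` grows by
`(v_l - v' S⁻¹ b) (u_l - c S⁻¹ u') / (d - c S⁻¹ b)`, where `S` is the old matrix, `b`, `c`, `d` the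
new column, row and corner (`form_inv_succ`). By the same Schur complement formula the two factors
are the determinants defining `Q_m(w)` and `Q̂_m(z)`, up to `D_m`, and the denominator is
`D_{m+1} / D_m`.
-/

open Complex Matrix Filter

/-- The `j`-th Fourier coefficient of a function on the unit circle:
`f_j = (1/(2πi)) ∮ f(ζ) ζ^{-j} dζ/ζ`. -/
noncomputable def fc (f : ℂ → ℂ) (j : ℤ) : ℂ :=
  (2 * (Real.pi : ℂ) * Complex.I)⁻¹ * ∮ ζ in C(0, 1), ζ ^ (-j - 1) * f ζ

/-- The `n × n` Toeplitz determinant `D_n[φ]`, with `D_0[φ] = 1`. -/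
noncomputable def toeplitzDet (φ : ℂ → ℂ) (n : ℕ) : ℂ :=
  (Matrix.of fun j k : Fin n => fc φ ((j : ℤ) - (k : ℤ))).det

/-- The bi-orthogonal polynomial `Q_k(z) = s_k⁻¹ det M_k(z)`, where `M_k(z)` has rows of
Fourier coefficients `φ_{i-j}` (for `i ≤ k-1`) and last row `(1, z, …, z^k)`. -/
noncomputable def Qpoly (φ : ℂ → ℂ) (s : ℕ → ℂ) (k : ℕ) (z : ℂ) : ℂ :=
  (s k)⁻¹ * (Matrix.of fun i j : Fin (k + 1) =>
    if (i : ℕ) = k then z ^ (j : ℕ) else fc φ ((i : ℤ) - (j : ℤ))).det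

/-- The bi-orthogonal polynomial `Q̂_k(z) = s_k⁻¹ det M̂_k(z)`, where `M̂_k(z)` has columns
of Fourier coefficients `φ_{i-j}` (for `j ≤ k-1`) and last column `(1, z, …, z^k)ᵀ`. -/
noncomputable def Qhat (φ : ℂ → ℂ) (s : ℕ → ℂ) (k : ℕ) (z : ℂ) : ℂ :=
  (s k)⁻¹ * (Matrix.of fun i j : Fin (k + 1) =>
    if (j : ℕ) = k then z ^ (i : ℕ) else fc φ ((i : ℤ) - (j : ℤ))).det

/-- The reproducing kernel `K_n(z, 𝓏) = Σ_{j=0}^n Q_j(𝓏) Q̂_j(z)`. -/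
noncomputable def repKernel (φ : ℂ → ℂ) (s : ℕ → ℂ) (n : ℕ) (z w : ℂ) : ℂ :=
  ∑ j ∈ Finset.range (n + 1), Qpoly φ s j w * Qhat φ s j z

/-- The semi-framed Toeplitz determinant `ℋ_n[φ;ψ,η;a]`. -/
noncomputable def semiFramedH (φ ψ η : ℂ → ℂ) (a : ℂ) (n : ℕ) : ℂ :=
  (Matrix.of fun j k : Fin n =>
    if (j : ℕ) = n - 1 then
      (if (k : ℕ) = n - 1 then a else fc η ((n : ℤ) - 2 - (k : ℤ)))
    else if (k : ℕ) = n - 1 then fc ψ (j : ℤ)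
    else fc φ ((j : ℤ) - (k : ℤ))).det

/-- The semi-framed Toeplitz determinant `ℰ_n[φ;ψ,η;a]`. -/
noncomputable def semiFramedE (φ ψ η : ℂ → ℂ) (a : ℂ) (n : ℕ) : ℂ :=
  (Matrix.of fun j k : Fin n =>
    if (j : ℕ) = n - 1 then
      (if (k : ℕ) = n - 1 then a else fc η ((n : ℤ) - 2 - (k : ℤ)))
    else if (k : ℕ) = n - 1 then fc ψ ((n : ℤ) - 2 - (j : ℤ))
    else fc φ ((j : ℤ) - (k : ℤ))).det

/-- Schur complement formula for a matrix bordered by one last row and one last column. -/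
lemma det_eq_mul_schur {m : ℕ} (M : Matrix (Fin (m + 1)) (Fin (m + 1)) ℂ)
    (S : Matrix (Fin m) (Fin m) ℂ) (b c : Fin m → ℂ) (d : ℂ) (hSdet : S.det ≠ 0)
    (hS : ∀ i j, M (Fin.castSucc i) (Fin.castSucc j) = S i j)
    (hb : ∀ i, M (Fin.castSucc i) (Fin.last m) = b i)
    (hc : ∀ j, M (Fin.last m) (Fin.castSucc j) = c j)
    (hd : M (Fin.last m) (Fin.last m) = d) :
    M.det = S.det * (d - c ⬝ᵥ (S⁻¹ *ᵥ b)) := by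
  have : Invertible S := Matrix.invertibleOfIsUnitDet S (isUnit_iff_ne_zero.mpr hSdet)
  have h : M.submatrix (finSumFinEquiv (m := m) (n := 1)) finSumFinEquiv
      = Matrix.fromBlocks S (Matrix.of fun i _ => b i) (Matrix.of fun _ j => c j)
        (Matrix.of fun _ _ => d) := by
    ext i j
    rcases i with i | i <;> rcases j with j | j
    · exact hS i j
    · obtain rfl : j = 0 := Subsingleton.elim _ _
      exact hb i
    · obtain rfl : i = 0 := Subsingleton.elim _ _
      exact hc j
    · obtain rfl : j = 0 := Subsingleton.elim _ _
      obtain rfl : i = 0 := Subsingleton.elim _ _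
      exact hd
  rw [← Matrix.det_submatrix_equiv_self (finSumFinEquiv (m := m) (n := 1)) M, h,
    Matrix.det_fromBlocks₁₁, Matrix.invOf_eq_nonsing_inv, Matrix.det_fin_one]
  congr 1
  rw [Matrix.sub_apply, Matrix.mul_assoc]
  rfl

/-- Growth of the bilinear form `v M⁻¹ u` when a matrix `S` is bordered by one row and column. -/
lemma form_inv_succ {m : ℕ} (M : Matrix (Fin (m + 1)) (Fin (m + 1)) ℂ)
    (S : Matrix (Fin m) (Fin m) ℂ) (b c : Fin m → ℂ) (d : ℂ) (hSdet : S.det ≠ 0)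
    (hMdet : M.det ≠ 0)
    (hS : ∀ i j, M (Fin.castSucc i) (Fin.castSucc j) = S i j)
    (hb : ∀ i, M (Fin.castSucc i) (Fin.last m) = b i)
    (hc : ∀ j, M (Fin.last m) (Fin.castSucc j) = c j)
    (hd : M (Fin.last m) (Fin.last m) = d) (u v : ℕ → ℂ) :
    (fun i : Fin (m + 1) => v i) ⬝ᵥ (M⁻¹ *ᵥ fun i => u i)
      = (fun i : Fin m => v i) ⬝ᵥ (S⁻¹ *ᵥ fun i => u i)
        + (v m - (fun i : Fin m => v i) ⬝ᵥ (S⁻¹ *ᵥ b))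
          * (u m - c ⬝ᵥ (S⁻¹ *ᵥ fun i => u i)) * (S.det / M.det) := by
  have hdet := det_eq_mul_schur M S b c d hSdet hS hb hc hd
  set x := S⁻¹ *ᵥ (fun i : Fin m => u i) with hx
  set y := S⁻¹ *ᵥ b with hy
  have hSx : S *ᵥ x = fun i : Fin m => u i := by
    rw [hx, Matrix.mulVec_mulVec, Matrix.mul_nonsing_inv _ (isUnit_iff_ne_zero.mpr hSdet),
      Matrix.one_mulVec]
  have hSy : S *ᵥ y = b := by
    rw [hy, Matrix.mulVec_mulVec, Matrix.mul_nonsing_inv _ (isUnit_iff_ne_zero.mpr hSdet),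
      Matrix.one_mulVec]
  -- The last coordinate of the solution of `M *ᵥ X = u`, found by eliminating the first `m`.
  set t : ℂ := (u m - c ⬝ᵥ x) * (S.det / M.det) with ht
  have hσ : (d - c ⬝ᵥ y) * t = u m - c ⬝ᵥ x := by
    have : (d - c ⬝ᵥ y) * (S.det / M.det) = 1 := by
      rw [mul_div_assoc', div_eq_one_iff_eq hMdet, hdet, mul_comm]
    rw [ht, mul_left_comm, this, mul_one]
  have hsol : M *ᵥ (Fin.snoc (α := fun _ => ℂ) (x - t • y) t) = fun i : Fin (m + 1) => u i := by
    ext i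
    refine Fin.lastCases ?_ (fun i => ?_) i
    · have h1 : c ⬝ᵥ (x - t • y) + d * t = u m := by
        rw [dotProduct_sub, dotProduct_smul, smul_eq_mul]
        linear_combination hσ
      simp only [Matrix.mulVec, dotProduct, Fin.sum_univ_castSucc, Fin.snoc_castSucc,
        Fin.snoc_last, hc, hd, Fin.val_last]
      exact h1
    · have h1 : (S *ᵥ (x - t • y)) i + b i * t = u i := by
        rw [Matrix.mulVec_sub, Matrix.mulVec_smul, hSx, hSy]
        simp only [Pi.sub_apply, Pi.smul_apply, smul_eq_mul]
        ring
      simp only [Matrix.mulVec, dotProduct, Fin.sum_univ_castSucc, Fin.snoc_castSucc,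
        Fin.snoc_last, hS, hb, Fin.val_castSucc]
      exact h1
  rw [← hsol, Matrix.mulVec_mulVec, Matrix.nonsing_inv_mul _ (isUnit_iff_ne_zero.mpr hMdet),
    Matrix.one_mulVec]
  have h2 : (fun i : Fin (m + 1) => v i) ⬝ᵥ (Fin.snoc (α := fun _ => ℂ) (x - t • y) t)
      = (fun i : Fin m => v i) ⬝ᵥ (x - t • y) + v m * t := by
    simp only [dotProduct, Fin.sum_univ_castSucc, Fin.snoc_castSucc, Fin.snoc_last,
      Fin.val_last, Fin.val_castSucc]
  rw [h2, dotProduct_sub, dotProduct_smul, smul_eq_mul, ht]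
  ring

/-- The `m × m` Toeplitz matrix of `φ`, whose determinant is `toeplitzDet φ m`. -/
noncomputable def toeplitzMat (φ : ℂ → ℂ) (m : ℕ) : Matrix (Fin m) (Fin m) ℂ :=
  Matrix.of fun j k : Fin m => fc φ ((j : ℤ) - (k : ℤ))

/-- The kernel is the bilinear form of the inverse Toeplitz matrix. -/
lemma repKernel_sum_eq (φ : ℂ → ℂ) (s : ℕ → ℂ) (z w : ℂ) (m : ℕ)
    (hD : ∀ k ≤ m, toeplitzDet φ k ≠ 0)
    (hs : ∀ k < m, s k ^ 2 = toeplitzDet φ k * toeplitzDet φ (k + 1)) :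
    ∑ j ∈ Finset.range m, Qpoly φ s j w * Qhat φ s j z
      = (fun i : Fin m => w ^ (i : ℕ)) ⬝ᵥ ((toeplitzMat φ m)⁻¹ *ᵥ fun i => z ^ (i : ℕ)) := by
  induction m with
  | zero => simp [dotProduct]
  | succ m ih =>
    have hm : (toeplitzMat φ m).det ≠ 0 := hD m (by omega)
    have hm1 : (toeplitzMat φ (m + 1)).det ≠ 0 := hD (m + 1) le_rfl
    have hsm : s m ^ 2 = (toeplitzMat φ m).det * (toeplitzMat φ (m + 1)).det := hs m (by omega)
    have key := form_inv_succ (toeplitzMat φ (m + 1)) (toeplitzMat φ m)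
      (fun i => fc φ ((i : ℤ) - (m : ℤ))) (fun j => fc φ ((m : ℤ) - (j : ℤ))) (fc φ ((m : ℤ) - m))
      hm hm1 (fun i j => by simp [toeplitzMat]) (fun i => by simp [toeplitzMat])
      (fun i => by simp [toeplitzMat]) (by simp [toeplitzMat]) (fun i => z ^ i) (fun i => w ^ i)
    have hQ : Qpoly φ s m w = (s m)⁻¹ * ((toeplitzMat φ m).det * (w ^ m
        - (fun i : Fin m => w ^ (i : ℕ)) ⬝ᵥ
          ((toeplitzMat φ m)⁻¹ *ᵥ fun i => fc φ ((i : ℤ) - (m : ℤ))))) := by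
      rw [Qpoly, det_eq_mul_schur _ (toeplitzMat φ m) (fun i => fc φ ((i : ℤ) - (m : ℤ)))
        (fun i : Fin m => w ^ (i : ℕ)) (w ^ m) hm]
      · intro i j
        simp [toeplitzMat, i.isLt.ne]
      · intro i
        simp [i.isLt.ne]
      · intro j
        simp
      · simp
    have hQh : Qhat φ s m z = (s m)⁻¹ * ((toeplitzMat φ m).det * (z ^ m
        - (fun j : Fin m => fc φ ((m : ℤ) - (j : ℤ))) ⬝ᵥ
          ((toeplitzMat φ m)⁻¹ *ᵥ fun i => z ^ (i : ℕ)))) := by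
      rw [Qhat, det_eq_mul_schur _ (toeplitzMat φ m) (fun i : Fin m => z ^ (i : ℕ))
        (fun j => fc φ ((m : ℤ) - (j : ℤ))) (z ^ m) hm]
      · intro i j
        simp [toeplitzMat, j.isLt.ne]
      · intro i
        simp
      · intro j
        simp [j.isLt.ne]
      · simp
    rw [Finset.sum_range_succ, ih (fun k hk => hD k (by omega)) (fun k hk => hs k (by omega)),
      key, hQ, hQh]
    have hfac : (s m)⁻¹ * (s m)⁻¹ * ((toeplitzMat φ m).det * (toeplitzMat φ m).det)
        = (toeplitzMat φ m).det / (toeplitzMat φ (m + 1)).det := by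
      rw [← mul_inv, ← sq, hsm]
      field_simp
    rw [← hfac]
    ring

lemma repKernel_eq (φ : ℂ → ℂ) (s : ℕ → ℂ) (z w : ℂ) (n : ℕ)
    (hD : ∀ k ≤ n + 1, toeplitzDet φ k ≠ 0)
    (hs : ∀ k ≤ n, s k ^ 2 = toeplitzDet φ k * toeplitzDet φ (k + 1)) :
    repKernel φ s n z w
      = ∑ k : Fin (n + 1), w ^ (k : ℕ) *
          ∑ i : Fin (n + 1), (toeplitzMat φ (n + 1))⁻¹ k i * z ^ (i : ℕ) :=
  repKernel_sum_eq φ s z w (n + 1) hD fun k hk => hs k (by omega)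

lemma circleIntegrable_zpow_mul {f : ℂ → ℂ} (hf : CircleIntegrable f 0 1) (k : ℤ) :
    CircleIntegrable (fun z => z ^ k * f z) 0 1 := by
  unfold CircleIntegrable at hf ⊢
  refine hf.continuousOn_mul (f := fun θ => f (circleMap 0 1 θ))
    (g := fun θ => circleMap 0 1 θ ^ k) (Continuous.continuousOn ?_)
  exact (continuous_circleMap 0 1).zpow₀ k fun θ => Or.inl (circleMap_ne_center one_ne_zero)

/-- Integrating `f` against a Laurent polynomial gives the matching combination of Fourier
coefficients; equality of the integrand with the Laurent form is only needed on the circle. -/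
lemma integral_sum_zpow {ι : Type*} [Fintype ι] {f : ℂ → ℂ} (hf : CircleIntegrable f 0 1)
    (e : ι → ℂ) (p : ι → ℤ) (g : ℂ → ℂ)
    (hg : ∀ z : ℂ, z ≠ 0 → g z = ∑ i, e i * (z ^ (-p i - 1) * f z)) :
    (2 * (Real.pi : ℂ) * Complex.I)⁻¹ * ∮ z in C(0, 1), g z = ∑ i, e i * fc f (p i) := by
  have h1 : ∮ z in C(0, 1), g z
      = ∮ z in C(0, 1), ∑ i, e i * (z ^ (-p i - 1) * f z) := by
    refine circleIntegral.integral_congr zero_le_one fun z hz => hg z ?_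
    rintro rfl
    simp at hz
  rw [h1, circleIntegral.integral_fun_sum, Finset.mul_sum]
  · refine Finset.sum_congr rfl fun i _ => ?_
    rw [circleIntegral.integral_const_mul, fc]
    ring
  · intro i _
    exact (circleIntegrable_zpow_mul hf _).const_fun_smul (a := e i)

/-- Theorem 1.11 (the `ℋ` case): the semi-framed Toeplitz determinant `ℋ_{n+2}[φ;ψ,η;a]`
in terms of the reproducing kernel of bi-orthogonal polynomials on the unit circle. -/
theorem semiFramedH_eq_repKernel_integral
    (φ ψ η : ℂ → ℂ) (hφ : CircleIntegrable φ 0 1) (hψ : CircleIntegrable ψ 0 1)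
    (hη : CircleIntegrable η 0 1) (a : ℂ) (n : ℕ) (s : ℕ → ℂ)
    (hD : ∀ k ≤ n + 1, toeplitzDet φ k ≠ 0)
    (hs : ∀ k ≤ n, s k ^ 2 = toeplitzDet φ k * toeplitzDet φ (k + 1)) :
    semiFramedH φ ψ η a (n + 2) / toeplitzDet φ (n + 1)
      = a - (2 * (Real.pi : ℂ) * Complex.I)⁻¹ * ∮ z₁ in C(0, 1),
          ((2 * (Real.pi : ℂ) * Complex.I)⁻¹ * ∮ z₂ in C(0, 1),
            repKernel φ s n z₁⁻¹ z₂ * (z₂ ^ (-(n : ℤ)) * η z₂) / z₂) * ψ z₁ / z₁ := by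
  set B := (toeplitzMat φ (n + 1))⁻¹ with hB
  have hinner : ∀ z₁ : ℂ, (2 * (Real.pi : ℂ) * Complex.I)⁻¹ * ∮ z₂ in C(0, 1),
      repKernel φ s n z₁⁻¹ z₂ * (z₂ ^ (-(n : ℤ)) * η z₂) / z₂
      = ∑ k : Fin (n + 1), (∑ i : Fin (n + 1), B k i * z₁⁻¹ ^ (i : ℕ)) * fc η ((n : ℤ) - k) := by
    intro z₁
    refine integral_sum_zpow hη _ _ _ fun z hz => ?_
    rw [repKernel_eq φ s _ _ n hD hs, Finset.sum_mul, Finset.sum_div]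
    refine Finset.sum_congr rfl fun k _ => ?_
    rw [show -((n : ℤ) - (k : ℕ)) - 1 = (k : ℕ) + -(n : ℤ) - 1 by ring, zpow_sub₀ hz, zpow_add₀ hz,
      zpow_natCast, zpow_one]
    ring
  have houter : (2 * (Real.pi : ℂ) * Complex.I)⁻¹ * ∮ z₁ in C(0, 1),
      ((2 * (Real.pi : ℂ) * Complex.I)⁻¹ * ∮ z₂ in C(0, 1),
        repKernel φ s n z₁⁻¹ z₂ * (z₂ ^ (-(n : ℤ)) * η z₂) / z₂) * ψ z₁ / z₁
      = ∑ i : Fin (n + 1), (∑ k : Fin (n + 1), fc η ((n : ℤ) - k) * B k i) * fc ψ (i : ℕ) := by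
    refine integral_sum_zpow hψ _ _ _ fun z hz => ?_
    rw [hinner]
    simp only [Finset.sum_mul, Finset.sum_div]
    rw [Finset.sum_comm]
    refine Finset.sum_congr rfl fun i _ => Finset.sum_congr rfl fun k _ => ?_
    rw [zpow_sub₀ hz, _root_.zpow_neg, zpow_natCast, zpow_one, inv_pow]
    ring
  have hdet : (toeplitzMat φ (n + 1)).det ≠ 0 := hD (n + 1) le_rfl
  have hH : semiFramedH φ ψ η a (n + 2) = toeplitzDet φ (n + 1) *
      (a - (fun k : Fin (n + 1) => fc η ((n : ℤ) - k)) ⬝ᵥ (B *ᵥ fun i => fc ψ (i : ℕ))) := by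
    rw [semiFramedH, det_eq_mul_schur (m := n + 1) _ (toeplitzMat φ (n + 1))
      (fun i => fc ψ (i : ℕ)) (fun k : Fin (n + 1) => fc η ((n : ℤ) - k)) a hdet]
    · rfl
    · intro i j
      simp [toeplitzMat, i.isLt.ne, j.isLt.ne]
    · intro i
      simp [i.isLt.ne]
    · intro j
      simp [j.isLt.ne]
    · simp
  rw [houter, hH, mul_div_cancel_left₀ _ (hD (n + 1) le_rfl), Matrix.dotProduct_mulVec]
  rfl
end

section
/- Let φ, ψ, η be integrable on 𝕋, a ∈ ℂ, n ≥ 0, and suppose D_k[φ] ≠ 0 for 0 ≤ k ≤ n+1. Then ℰ_{n+2}[φ;ψ,η;a] / D_{n+1}[φ] = a − ∮_𝕋 ( ∮_𝕋 K_n(z₁, z₂) · z₂^{−n} η(z₂) dz₂/(2πi z₂) ) z₁^{−n} ψ(z₁) dz₁/(2πi z₁). -/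
/-!
The proof has an algebraic and an analytic half.

*Algebra.* For an infinite array `t`, a row `u` and a column `v`, let `bord t u v a k` be the
determinant of the `k × k` corner `T_k` of `t` bordered by `u`, `v` and the corner entry `a`.
All determinants in the statement have this shape. Taking the Schur complement of `T_k` in the
twice bordered matrix gives the Desnanot–Jacobi type identity `bord_succ_mul`,
`D_k · B_{k+1}(u, v, a) = D_{k+1} · B_k(u, v, a) - P_k(u) · P̂_k(v)`,
where `P_k(u)`, `P̂_k(v)` are `D_{k+1}` with last row, respectively last column, replaced by
`u`, `v`. Dividing by `D_k D_{k+1}` and telescoping,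
`B_{n+1}(u, v, a) / D_{n+1} = a - ∑_{k ≤ n} P_k(u) P̂_k(v) / (D_k D_{k+1})`
(`bord_div_eq`).

*Analysis.* The functional `p ↦ (2πi)⁻¹ ∮ p(z) z^{-n} f(z) dz / z` sends `z^j` to the Fourier
coefficient `f_{n-j}`. As `Q_k`, `Q̂_k` are determinants linear in a row or column of monomials,
it sends them to `P_k(u) / s_k` and `P̂_k(v) / s_k` with `u_j = η_{n-j}`, `v_j = ψ_{n-j}`. Since
`s_k² = D_k D_{k+1}`, the double integral of the kernel is the sum above.
-/

open Complex Matrix Filter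

/-! ### Bordered determinants -/

/-- The `k × k` upper left corner of the infinite array `t`. -/
def corner (t : ℕ → ℕ → ℂ) (k : ℕ) : Matrix (Fin k) (Fin k) ℂ :=
  Matrix.of fun i j => t i j

/-- The determinant of the `k × k` corner of `t` bordered by the last row `u`, the last column
`v` and the corner entry `a`. -/
noncomputable def bord (t : ℕ → ℕ → ℂ) (u v : ℕ → ℂ) (a : ℂ) (k : ℕ) : ℂ :=
  (Matrix.of fun i j : Fin (k + 1) =>
    if (i : ℕ) = k then (if (j : ℕ) = k then a else u j)
    else if (j : ℕ) = k then v i else t i j).det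

lemma corner_succ_det (t : ℕ → ℕ → ℂ) (k : ℕ) :
    (corner t (k + 1)).det = bord t (t k) (fun i => t i k) (t k k) k := by
  unfold bord corner
  congr 1
  ext i j
  simp only [Matrix.of_apply]
  split_ifs <;> simp_all

/-- The Schur complement bilinear form `u T_k⁻¹ v`. -/
noncomputable def schurForm (t : ℕ → ℕ → ℂ) (k : ℕ) (u v : ℕ → ℂ) : ℂ :=
  ∑ j : Fin k, (∑ i : Fin k, u i * (corner t k)⁻¹ i j) * v j

lemma bord_eq_schur (t : ℕ → ℕ → ℂ) (u v : ℕ → ℂ) (a : ℂ) (k : ℕ)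
    (hk : (corner t k).det ≠ 0) :
    bord t u v a k = (corner t k).det * (a - schurForm t k u v) := by
  have : Invertible (corner t k) :=
    Matrix.invertibleOfIsUnitDet _ (isUnit_iff_ne_zero.mpr hk)
  have h := Matrix.det_fromBlocks₁₁ (corner t k)
    (Matrix.of fun (i : Fin k) (_ : Fin 1) => v i)
    (Matrix.of fun (_ : Fin 1) (j : Fin k) => u j)
    (Matrix.of fun (_ _ : Fin 1) => a)
  rw [Matrix.det_fin_one] at h
  unfold bord
  rw [← Matrix.det_submatrix_equiv_self (finSumFinEquiv : Fin k ⊕ Fin 1 ≃ Fin (k + 1))]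
  convert h using 2
  · ext i j
    rcases i with i | i <;> rcases j with j | j <;>
      simp [corner, Fin.val_eq_zero, i.isLt.ne, j.isLt.ne]
  · simp [schurForm, Matrix.mul_apply, Matrix.sub_apply]

lemma bord_succ_eq_schur (t : ℕ → ℕ → ℂ) (u v : ℕ → ℂ) (a : ℂ) (k : ℕ)
    (hk : (corner t k).det ≠ 0) :
    bord t u v a (k + 1) = (corner t k).det *
      ((t k k - schurForm t k (t k) (fun i => t i k)) * (a - schurForm t k u v)
        - (v k - schurForm t k (t k) v) * (u k - schurForm t k u (fun i => t i k))) := by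
  have : Invertible (corner t k) :=
    Matrix.invertibleOfIsUnitDet _ (isUnit_iff_ne_zero.mpr hk)
  have h := Matrix.det_fromBlocks₁₁ (corner t k)
    (Matrix.of fun (i : Fin k) (l : Fin 2) => if l = 0 then t i k else v i)
    (Matrix.of fun (l : Fin 2) (j : Fin k) => if l = 0 then t k j else u j)
    (Matrix.of fun (l m : Fin 2) =>
      if l = 0 then (if m = 0 then t k k else v k) else (if m = 0 then u k else a))
  rw [Matrix.det_fin_two] at h
  unfold bord
  rw [← Matrix.det_submatrix_equiv_self (finSumFinEquiv : Fin k ⊕ Fin 2 ≃ Fin (k + 2))]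
  convert h using 2
  · ext i j
    rcases i with i | i <;> rcases j with j | j
    · have hi := i.isLt
      have hj := j.isLt
      simp [corner, show (i : ℕ) ≠ k + 1 by omega, show (j : ℕ) ≠ k + 1 by omega]
    · have hi := i.isLt
      fin_cases j <;> simp [show (i : ℕ) ≠ k + 1 by omega]
    · have hj := j.isLt
      fin_cases i <;> simp [show (j : ℕ) ≠ k + 1 by omega]
    · fin_cases i <;> fin_cases j <;> simp
  · simp [schurForm, Matrix.mul_apply, Matrix.sub_apply]

/-- A Desnanot–Jacobi type identity: both sides are quadratic in the entries of the `2 × 2` Schur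
complement of the `k × k` corner. -/
lemma bord_succ_mul (t : ℕ → ℕ → ℂ) (u v : ℕ → ℂ) (a : ℂ) (k : ℕ)
    (hk : (corner t k).det ≠ 0) :
    (corner t k).det * bord t u v a (k + 1) = (corner t (k + 1)).det * bord t u v a k
      - bord t u (fun i => t i k) (u k) k * bord t (t k) v (v k) k := by
  rw [corner_succ_det, bord_succ_eq_schur t u v a k hk, bord_eq_schur _ _ _ _ _ hk,
    bord_eq_schur _ _ _ _ _ hk, bord_eq_schur _ _ _ _ _ hk, bord_eq_schur _ _ _ _ _ hk]
  ring

lemma bord_div_eq (t : ℕ → ℕ → ℂ) (u v : ℕ → ℂ) (a : ℂ) (n : ℕ)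
    (h : ∀ k ≤ n, (corner t k).det ≠ 0) :
    bord t u v a n / (corner t n).det = a - ∑ k ∈ Finset.range n,
      bord t u (fun i => t i k) (u k) k * bord t (t k) v (v k) k
        / ((corner t k).det * (corner t (k + 1)).det) := by
  induction n with
  | zero => simp [bord]
  | succ n ih =>
    have h0 := h n (by omega)
    have h1 := h (n + 1) le_rfl
    rw [Finset.sum_range_succ, ← sub_sub, ← ih fun k hk => h k (by omega)]
    have := bord_succ_mul t u v a n h0
    field_simp
    linear_combination this

/-! ### Linearity in the last row or column -/

/-- Up to its last row `u`, the bordered matrix is fixed, so its determinant is a fixed linear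
form in the entries of `u`. -/
lemma exists_row_expansion (t : ℕ → ℕ → ℂ) (k : ℕ) :
    ∃ c : Fin (k + 1) → ℂ, ∀ u : ℕ → ℂ,
      (Matrix.of fun i j : Fin (k + 1) => if (i : ℕ) = k then u j else t i j).det
        = ∑ j, c j * u j := by
  refine ⟨fun j => (-1) ^ (k + (j : ℕ)) *
    (Matrix.of fun (i l : Fin k) => t i (j.succAbove l)).det, fun u => ?_⟩
  rw [Matrix.det_succ_row _ (Fin.last k)]
  refine Finset.sum_congr rfl fun j _ => ?_
  have : (Matrix.of fun i j : Fin (k + 1) => if (i : ℕ) = k then u j else t i j).submatrix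
      (Fin.last k).succAbove j.succAbove
      = Matrix.of fun (i l : Fin k) => t i (j.succAbove l) := by
    ext i l
    simp [i.isLt.ne]
  rw [this]
  simp
  ring

lemma exists_col_expansion (t : ℕ → ℕ → ℂ) (k : ℕ) :
    ∃ c : Fin (k + 1) → ℂ, ∀ v : ℕ → ℂ,
      (Matrix.of fun i j : Fin (k + 1) => if (j : ℕ) = k then v i else t i j).det
        = ∑ j, c j * v j := by
  obtain ⟨c, hc⟩ := exists_row_expansion (fun i j => t j i) k
  refine ⟨c, fun v => ?_⟩
  rw [← hc, ← Matrix.det_transpose]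
  rfl

lemma bord_row (t : ℕ → ℕ → ℂ) (u : ℕ → ℂ) (k : ℕ) :
    bord t u (fun i => t i k) (u k) k =
      (Matrix.of fun i j : Fin (k + 1) => if (i : ℕ) = k then u j else t i j).det := by
  unfold bord
  congr 1
  ext i j
  simp only [Matrix.of_apply]
  split_ifs <;> simp_all

lemma bord_col (t : ℕ → ℕ → ℂ) (v : ℕ → ℂ) (k : ℕ) :
    bord t (t k) v (v k) k =
      (Matrix.of fun i j : Fin (k + 1) => if (j : ℕ) = k then v i else t i j).det := by
  unfold bord
  congr 1
  ext i j
  simp only [Matrix.of_apply]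
  split_ifs <;> simp_all

/-! ### The moment functional on the circle -/

/-- The functional `p ↦ (2πi)⁻¹ ∮ p(z) z^{-n} f(z) dz / z`. -/
noncomputable def moment (f : ℂ → ℂ) (n : ℕ) (p : ℂ → ℂ) : ℂ :=
  (2 * (Real.pi : ℂ) * Complex.I)⁻¹ * ∮ z in C(0, 1), p z * (z ^ (-(n : ℤ)) * f z) / z

lemma circleIntegrable_weight {f : ℂ → ℂ} (hf : CircleIntegrable f 0 1) (n : ℕ) {p : ℂ → ℂ}
    (hp : Continuous p) :
    CircleIntegrable (fun z => p z * (z ^ (-(n : ℤ)) * f z) / z) 0 1 := by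
  have hcont : Continuous fun θ : ℝ =>
      p (circleMap 0 1 θ) * (circleMap 0 1 θ) ^ (-(n : ℤ)) * (circleMap 0 1 θ)⁻¹ := by
    have h0 : ∀ θ : ℝ, circleMap 0 1 θ ≠ 0 := fun θ => circleMap_ne_center one_ne_zero
    have hc : Continuous (circleMap 0 1) := continuous_circleMap 0 1
    exact ((hp.comp hc).mul (hc.zpow₀ _ fun θ => Or.inl (h0 θ))).mul (hc.inv₀ h0)
  have := IntervalIntegrable.continuousOn_mul hf hcont.continuousOn
  refine this.congr fun θ _ => ?_
  simp only [div_eq_mul_inv]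
  ring

lemma moment_pow (f : ℂ → ℂ) (n j : ℕ) :
    moment f n (fun z => z ^ j) = fc f ((n : ℤ) - j) := by
  unfold moment fc
  congr 1
  refine circleIntegral.integral_congr zero_le_one fun z hz => ?_
  have hz0 : z ≠ 0 := by
    rintro rfl
    simp at hz
  have : z ^ (-((n : ℤ) - j) - 1) = z ^ j * z ^ (-(n : ℤ)) * z⁻¹ := by
    rw [← zpow_natCast z j, ← zpow_neg_one z, ← zpow_add₀ hz0, ← zpow_add₀ hz0]
    congr 1
    ring
  simp only [this, div_eq_mul_inv]
  ring

lemma moment_sum {f : ℂ → ℂ} (hf : CircleIntegrable f 0 1) (n : ℕ) {ι : Type*} (S : Finset ι)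
    (c : ι → ℂ) (p : ι → ℂ → ℂ) (hp : ∀ i ∈ S, Continuous (p i)) :
    moment f n (fun z => ∑ i ∈ S, c i * p i z) = ∑ i ∈ S, c i * moment f n (p i) := by
  unfold moment
  have h : (fun z => (∑ i ∈ S, c i * p i z) * (z ^ (-(n : ℤ)) * f z) / z)
      = fun z => ∑ i ∈ S, c i * (p i z * (z ^ (-(n : ℤ)) * f z) / z) := by
    funext z
    rw [Finset.sum_mul, Finset.sum_div]
    exact Finset.sum_congr rfl fun i _ => by ring
  rw [h, circleIntegral.integral_fun_sum, Finset.mul_sum]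
  · refine Finset.sum_congr rfl fun i _ => ?_
    rw [circleIntegral.integral_const_mul]
    ring
  · intro i hi
    exact circleIntegrable_weight (p := fun z => c i * p i z) hf n
      (continuous_const.mul (hp i hi)) |>.congr fun θ _ => by ring

lemma moment_lincomb_pow {f : ℂ → ℂ} (hf : CircleIntegrable f 0 1) (n k : ℕ)
    (c : Fin (k + 1) → ℂ) :
    moment f n (fun z => ∑ j, c j * z ^ (j : ℕ)) = ∑ j, c j * fc f ((n : ℤ) - (j : ℕ)) := by
  rw [moment_sum hf n Finset.univ c (fun j z => z ^ (j : ℕ)) fun j _ => continuous_pow _]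
  simp only [moment_pow]

/-! ### Moments of the bi-orthogonal polynomials -/

/-- The infinite Toeplitz array `φ_{i-j}`. -/
noncomputable def toepArray (φ : ℂ → ℂ) (i j : ℕ) : ℂ := fc φ ((i : ℤ) - (j : ℤ))

lemma Qpoly_continuous (φ : ℂ → ℂ) (s : ℕ → ℂ) (k : ℕ) : Continuous (Qpoly φ s k) := by
  obtain ⟨c, hc⟩ := exists_row_expansion (toepArray φ) k
  have : Qpoly φ s k = fun z => (s k)⁻¹ * ∑ j, c j * z ^ (j : ℕ) :=
    funext fun z => congrArg ((s k)⁻¹ * ·) (hc fun j => z ^ j)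
  rw [this]
  fun_prop

lemma Qhat_continuous (φ : ℂ → ℂ) (s : ℕ → ℂ) (k : ℕ) : Continuous (Qhat φ s k) := by
  obtain ⟨c, hc⟩ := exists_col_expansion (toepArray φ) k
  have : Qhat φ s k = fun z => (s k)⁻¹ * ∑ j, c j * z ^ (j : ℕ) :=
    funext fun z => congrArg ((s k)⁻¹ * ·) (hc fun j => z ^ j)
  rw [this]
  fun_prop

lemma moment_Qpoly (φ : ℂ → ℂ) {f : ℂ → ℂ} (hf : CircleIntegrable f 0 1) (s : ℕ → ℂ)
    (n k : ℕ) :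
    moment f n (Qpoly φ s k) = (s k)⁻¹ * bord (toepArray φ) (fun j => fc f ((n : ℤ) - j))
      (fun i => toepArray φ i k) (fc f ((n : ℤ) - k)) k := by
  obtain ⟨c, hc⟩ := exists_row_expansion (toepArray φ) k
  have : Qpoly φ s k = fun z => ∑ j, ((s k)⁻¹ * c j) * z ^ (j : ℕ) := by
    funext z
    refine (congrArg ((s k)⁻¹ * ·) (hc fun j => z ^ j)).trans ?_
    simp only [Finset.mul_sum, mul_assoc]
  rw [this, moment_lincomb_pow hf, bord_row (toepArray φ) (fun j => fc f ((n : ℤ) - j)),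
    hc fun j : ℕ => fc f ((n : ℤ) - j),
    Finset.mul_sum]
  simp only [mul_assoc]

lemma moment_Qhat (φ : ℂ → ℂ) {f : ℂ → ℂ} (hf : CircleIntegrable f 0 1) (s : ℕ → ℂ)
    (n k : ℕ) :
    moment f n (Qhat φ s k) = (s k)⁻¹ * bord (toepArray φ) (toepArray φ k)
      (fun j => fc f ((n : ℤ) - j)) (fc f ((n : ℤ) - k)) k := by
  obtain ⟨c, hc⟩ := exists_col_expansion (toepArray φ) k
  have : Qhat φ s k = fun z => ∑ j, ((s k)⁻¹ * c j) * z ^ (j : ℕ) := by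
    funext z
    refine (congrArg ((s k)⁻¹ * ·) (hc fun j => z ^ j)).trans ?_
    simp only [Finset.mul_sum, mul_assoc]
  rw [this, moment_lincomb_pow hf, bord_col (toepArray φ) (fun j => fc f ((n : ℤ) - j)),
    hc fun j : ℕ => fc f ((n : ℤ) - j),
    Finset.mul_sum]
  simp only [mul_assoc]

lemma semiFramedE_eq_bord (φ ψ η : ℂ → ℂ) (a : ℂ) (n : ℕ) :
    semiFramedE φ ψ η a (n + 2) = bord (toepArray φ) (fun j => fc η ((n : ℤ) - j))
      (fun j => fc ψ ((n : ℤ) - j)) a (n + 1) := by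
  unfold semiFramedE bord toepArray
  have h : ((n + 2 : ℕ) : ℤ) - 2 = n := by push_cast; ring
  simp only [h]
  rfl

/-- Theorem 1.11 (the `ℰ` case): the semi-framed Toeplitz determinant `ℰ_{n+2}[φ;ψ,η;a]`
in terms of the reproducing kernel of bi-orthogonal polynomials on the unit circle. -/
theorem semiFramedE_eq_repKernel_integral
    (φ ψ η : ℂ → ℂ) (hφ : CircleIntegrable φ 0 1) (hψ : CircleIntegrable ψ 0 1)
    (hη : CircleIntegrable η 0 1) (a : ℂ) (n : ℕ) (s : ℕ → ℂ)
    (hD : ∀ k ≤ n + 1, toeplitzDet φ k ≠ 0)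
    (hs : ∀ k ≤ n, s k ^ 2 = toeplitzDet φ k * toeplitzDet φ (k + 1)) :
    semiFramedE φ ψ η a (n + 2) / toeplitzDet φ (n + 1)
      = a - (2 * (Real.pi : ℂ) * Complex.I)⁻¹ * ∮ z₁ in C(0, 1),
          ((2 * (Real.pi : ℂ) * Complex.I)⁻¹ * ∮ z₂ in C(0, 1),
            repKernel φ s n z₁ z₂ * (z₂ ^ (-(n : ℤ)) * η z₂) / z₂)
            * (z₁ ^ (-(n : ℤ)) * ψ z₁) / z₁ := by
  change _ = a - moment ψ n (fun z₁ => moment η n (fun z₂ => repKernel φ s n z₁ z₂))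
  have hinner : ∀ z₁, moment η n (fun z₂ => repKernel φ s n z₁ z₂)
      = ∑ k ∈ Finset.range (n + 1), moment η n (Qpoly φ s k) * Qhat φ s k z₁ := by
    intro z₁
    have := moment_sum hη n (Finset.range (n + 1)) (fun k => Qhat φ s k z₁) (Qpoly φ s)
      fun k _ => Qpoly_continuous φ s k
    simpa only [repKernel, mul_comm] using this
  simp only [hinner]
  rw [moment_sum hψ n _ _ (Qhat φ s) fun k _ => Qhat_continuous φ s k, semiFramedE_eq_bord]
  refine (bord_div_eq (toepArray φ) (fun j => fc η ((n : ℤ) - j))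
    (fun j => fc ψ ((n : ℤ) - j)) a (n + 1) hD).trans ?_
  congr 1
  refine Finset.sum_congr rfl fun k hk => ?_
  have hk' : k ≤ n := by simpa [Nat.lt_succ_iff] using hk
  rw [moment_Qpoly φ hη, moment_Qhat φ hψ]
  have hsk : (corner (toepArray φ) k).det * (corner (toepArray φ) (k + 1)).det = s k ^ 2 :=
    (hs k hk').symm
  rw [hsk, div_eq_mul_inv, sq, mul_inv]
  ring
end

section
/- For any φ, ψ₁, ψ₂ integrable on 𝕋 and any n ≥ 3: D^B_n[φ;ψ₁,ψ₂] · D_{n−2}[zφ] = D^B_{n−1}[φ; z^{−1}ψ₁] · D^B_{n−1}[zφ; ψ₂] − D^B_{n−1}[φ; z^{−1}ψ₂] · D^B_{n−1}[zφ; ψ₁]. -/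
/-!
The identity is the Desnanot–Jacobi (Dodgson) identity for the `n × n` matrix `M` defining
`D^B_n[φ;ψ₁,ψ₂]`, applied to its first and last rows and its last two columns: every other
determinant in the statement is a minor of `M` (the Toeplitz one up to transposition), because
deleting the first row shifts the index of `φ`, and deleting the last row shifts those of the `ψᵢ`.

Desnanot–Jacobi (`desnanot_jacobi`) is proved over any commutative ring. Replace the last two
columns of the identity matrix by the first and last columns of `adjugate M`, giving `B`. Then
`M * B` is `M` with its last two columns replaced by `det M • e₀` and `det M • e_last`; taking
determinants gives the identity multiplied by `det M`. This factor is cancelled for the generic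
matrix over `ℤ[xᵢⱼ]`, and the identity is then specialized.
-/

open Complex Matrix Filter

/-- The bordered Toeplitz determinant `D^B_n[φ;ψ]`. -/
noncomputable def borderedDet (φ ψ : ℂ → ℂ) (n : ℕ) : ℂ :=
  (Matrix.of fun j k : Fin n =>
    if (k : ℕ) = n - 1 then fc ψ ((n : ℤ) - 1 - (j : ℤ))
    else fc φ ((k : ℤ) - (j : ℤ))).det

/-- The two-bordered Toeplitz determinant `D^B_n[φ;ψ₁,ψ₂]`. -/
noncomputable def twoBorderedDet (φ ψ₁ ψ₂ : ℂ → ℂ) (n : ℕ) : ℂ :=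
  (Matrix.of fun j k : Fin n =>
    if (k : ℕ) = n - 1 then fc ψ₂ ((n : ℤ) - 1 - (j : ℤ))
    else if (k : ℕ) = n - 2 then fc ψ₁ ((n : ℤ) - 1 - (j : ℤ))
    else fc φ ((k : ℤ) - (j : ℤ))).det

/-- The identity matrix with its last two columns replaced by the vectors `u` and `v`. -/
def idWithLastTwo {R : Type*} [CommRing R] {m : ℕ} (u v : Fin (m + 2) → R) :
    Matrix (Fin (m + 2)) (Fin (m + 2)) R :=
  Matrix.of fun i k =>
    if k = Fin.last (m + 1) then v i
    else if k = (Fin.last m).castSucc then u i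
    else (1 : Matrix _ _ R) i k

theorem det_idWithLastTwo {R : Type*} [CommRing R] {m : ℕ} (u v : Fin (m + 2) → R) :
    (idWithLastTwo u v).det =
      u (Fin.last m).castSucc * v (Fin.last (m + 1))
        - v (Fin.last m).castSucc * u (Fin.last (m + 1)) := by
  have hblock : (idWithLastTwo u v).submatrix finSumFinEquiv finSumFinEquiv =
      Matrix.fromBlocks (1 : Matrix (Fin m) (Fin m) R)
        (Matrix.of fun i k => if k = 1 then v (Fin.castAdd 2 i) else u (Fin.castAdd 2 i)) 0
        !![u (Fin.last m).castSucc, v (Fin.last m).castSucc;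
          u (Fin.last (m + 1)), v (Fin.last (m + 1))] := by
    have h0 : Fin.natAdd m (0 : Fin 2) = (Fin.last m).castSucc := by ext; simp
    have h1 : Fin.natAdd m (1 : Fin 2) = Fin.last (m + 1) := by ext; simp
    have hne : (Fin.last m).castSucc ≠ Fin.last (m + 1) := by simp [Fin.ext_iff]
    have hc0 : ∀ k : Fin m, Fin.castAdd 2 k ≠ (Fin.last m).castSucc := fun k => by
      have := k.2
      simp only [ne_eq, Fin.ext_iff, Fin.val_castAdd, Fin.val_castSucc, Fin.val_last]; omega
    have hc1 : ∀ k : Fin m, Fin.castAdd 2 k ≠ Fin.last (m + 1) := fun k => by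
      have := k.2
      simp only [ne_eq, Fin.ext_iff, Fin.val_castAdd, Fin.val_last]; omega
    ext i k
    rcases i with i | i <;> rcases k with k | k
    · simp [idWithLastTwo, hc0, hc1, Matrix.one_apply]
    · fin_cases k <;> simp [idWithLastTwo, h0, h1, hne]
    · fin_cases i <;> simp [idWithLastTwo, h0, h1, hc0, hc1, Matrix.one_apply, (hc0 k).symm,
        (hc1 k).symm]
    · fin_cases i <;> fin_cases k <;> simp [idWithLastTwo, h0, h1, hne]
  rw [← Matrix.det_submatrix_equiv_self finSumFinEquiv, hblock, Matrix.det_fromBlocks_zero₂₁,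
    Matrix.det_one, one_mul, Matrix.det_fin_two_of]

/-- Replacing the last two columns of `M` by `d • e₀` and `d • e_last` leaves, up to the sign
`(-1) ^ m` and the factor `d * d`, the minor without the first and last rows and the last two
columns. -/
theorem det_basis_columns {R : Type*} [CommRing R] {m : ℕ}
    (M : Matrix (Fin (m + 2)) (Fin (m + 2)) R) (d : R) :
    (Matrix.of fun i k : Fin (m + 2) =>
      if k = Fin.last (m + 1) then (if i = Fin.last (m + 1) then d else 0)
      else if k = (Fin.last m).castSucc then (if i = 0 then d else 0)
      else M i k).det =
    d * d * (-1) ^ m *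
      (M.submatrix (fun i : Fin m => i.succ.castSucc) (fun k => k.castSucc.castSucc)).det := by
  rw [Matrix.det_succ_column _ (Fin.last (m + 1)), Finset.sum_eq_single (Fin.last (m + 1))]
  · rw [Matrix.det_succ_column _ (Fin.last m), Finset.sum_eq_single 0]
    · have hsub : ∀ (N : Matrix (Fin (m + 2)) (Fin (m + 2)) R),
          (∀ i, ∀ k : Fin m, N i k.castSucc.castSucc = M i k.castSucc.castSucc) →
          ((N.submatrix (Fin.last (m + 1)).succAbove (Fin.last (m + 1)).succAbove).submatrix
            (Fin.succAbove 0) (Fin.last m).succAbove) =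
          M.submatrix (fun i : Fin m => i.succ.castSucc) (fun k => k.castSucc.castSucc) := by
        intro N hN
        ext i k
        simp [hN]
      rw [hsub]
      · have hne : (Fin.last m).castSucc ≠ Fin.last (m + 1) := by simp [Fin.ext_iff]
        have hsq : ((-1 : R)) ^ (m + 1 + (m + 1)) = 1 := Even.neg_one_pow ⟨m + 1, rfl⟩
        simp [hne, hsq]
        ring
      · intro i k
        have := k.2
        have a1 : k.castSucc.castSucc ≠ Fin.last (m + 1) := by
          simp only [ne_eq, Fin.ext_iff, Fin.val_castSucc, Fin.val_last]; omega
        have a2 : k.castSucc.castSucc ≠ (Fin.last m).castSucc := by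
          simp only [ne_eq, Fin.ext_iff, Fin.val_castSucc, Fin.val_last]; omega
        simp only [Matrix.of_apply, if_neg a1, if_neg a2]
    · intro i _ hi
      have hi' : i.castSucc ≠ 0 := fun h => hi (Fin.ext (by simpa using congrArg Fin.val h))
      have hne : (Fin.last m).castSucc ≠ Fin.last (m + 1) := by simp [Fin.ext_iff]
      simp [hne, hi']
    · simp
  · intro i _ hi
    simp [hi]
  · simp

/-- The Desnanot–Jacobi identity before cancelling the factor `det M`. -/
theorem desnanot_jacobi_mul_det {R : Type*} [CommRing R] {m : ℕ}
    (M : Matrix (Fin (m + 2)) (Fin (m + 2)) R) :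
    M.det * (M.det *
      (M.submatrix (fun i : Fin m => i.succ.castSucc) (fun k => k.castSucc.castSucc)).det) =
    M.det * ((M.submatrix Fin.castSucc Fin.castSucc).det
        * (M.submatrix Fin.succ (Fin.last m).castSucc.succAbove).det
      - (M.submatrix Fin.castSucc (Fin.last m).castSucc.succAbove).det
        * (M.submatrix Fin.succ Fin.castSucc).det) := by
  have hprod : M * idWithLastTwo (fun i => M.adjugate i 0)
        (fun i => M.adjugate i (Fin.last (m + 1))) =
      Matrix.of fun i k : Fin (m + 2) =>
        if k = Fin.last (m + 1) then (if i = Fin.last (m + 1) then M.det else 0)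
        else if k = (Fin.last m).castSucc then (if i = 0 then M.det else 0)
        else M i k := by
    have hadj : ∀ i k, ∑ j, M i j * M.adjugate j k = if i = k then M.det else 0 := by
      intro i k
      rw [← Matrix.mul_apply, Matrix.mul_adjugate]
      simp [Matrix.one_apply]
    ext i k
    rw [Matrix.mul_apply]
    simp only [idWithLastTwo, Matrix.of_apply]
    split_ifs with h1 h2 <;> simp_all [Matrix.one_apply]
  have hdet := congrArg Matrix.det hprod
  rw [Matrix.det_mul, det_idWithLastTwo, det_basis_columns] at hdet
  simp only [Matrix.adjugate_fin_succ_eq_det_submatrix, Fin.succAbove_last, Fin.succAbove_zero,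
    Fin.val_last, Fin.val_castSucc, Fin.val_zero] at hdet
  have hsq : ((-1 : R)) ^ m * (-1) ^ m = 1 := by rw [← pow_add]; exact Even.neg_one_pow ⟨m, rfl⟩
  simp only [pow_add, pow_one, zero_add] at hdet
  linear_combination (-(-1 : R) ^ m) * hdet
    + (M.det * ((M.submatrix Fin.castSucc Fin.castSucc).det
          * (M.submatrix Fin.succ (Fin.last m).castSucc.succAbove).det
        - (M.submatrix Fin.castSucc (Fin.last m).castSucc.succAbove).det
          * (M.submatrix Fin.succ Fin.castSucc).det) * ((-1) ^ m * (-1) ^ m + 1)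
      - M.det * M.det * (M.submatrix (fun i : Fin m => i.succ.castSucc)
        (fun k => k.castSucc.castSucc)).det) * hsq

/-- The Desnanot–Jacobi identity for the first and last rows and the last two columns. -/
theorem desnanot_jacobi {R : Type*} [CommRing R] {m : ℕ}
    (M : Matrix (Fin (m + 2)) (Fin (m + 2)) R) :
    M.det *
      (M.submatrix (fun i : Fin m => i.succ.castSucc) (fun k => k.castSucc.castSucc)).det =
    (M.submatrix Fin.castSucc Fin.castSucc).det
        * (M.submatrix Fin.succ (Fin.last m).castSucc.succAbove).det
      - (M.submatrix Fin.castSucc (Fin.last m).castSucc.succAbove).det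
        * (M.submatrix Fin.succ Fin.castSucc).det := by
  have hgen := mul_left_cancel₀ (Matrix.det_mvPolynomialX_ne_zero (Fin (m + 2)) ℤ)
    (desnanot_jacobi_mul_det (Matrix.mvPolynomialX (Fin (m + 2)) (Fin (m + 2)) ℤ))
  let f : MvPolynomial (Fin (m + 2) × Fin (m + 2)) ℤ →+* R :=
    MvPolynomial.eval₂Hom (Int.castRingHom R) fun p => M p.1 p.2
  have hM : (Matrix.mvPolynomialX (Fin (m + 2)) (Fin (m + 2)) ℤ).map f = M := by
    ext i k
    simp [f]
  have := congrArg f hgen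
  simpa only [map_mul, map_sub, RingHom.map_det, RingHom.mapMatrix_apply, Matrix.submatrix_map,
    ← Matrix.submatrix_map, hM] using this

theorem fc_mul_id (f : ℂ → ℂ) (j : ℤ) : fc (fun z => z * f z) j = fc f (j - 1) := by
  unfold fc
  congr 1
  refine circleIntegral.integral_congr zero_le_one fun z hz => ?_
  have hz0 : z ≠ 0 := by rintro rfl; simp at hz
  have : z ^ (-(j - 1) - 1) = z ^ (-j - 1) * z := by
    rw [← zpow_add_one₀ hz0]; congr 1; ring
  simp only [this, mul_assoc]

theorem fc_div_id (f : ℂ → ℂ) (j : ℤ) : fc (fun z => f z / z) j = fc f (j + 1) := by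
  unfold fc
  congr 1
  refine circleIntegral.integral_congr zero_le_one fun z hz => ?_
  have hz0 : z ≠ 0 := by rintro rfl; simp at hz
  have : z ^ (-j - 1) = z ^ (-(j + 1) - 1) * z := by
    rw [← zpow_add_one₀ hz0]; congr 1; ring
  simp only [this]
  field_simp

/-- Skipping the last-but-one index of `Fin (m + 2)`. -/
theorem val_succAbove_castSucc_last {m : ℕ} (k : Fin (m + 1)) :
    (((Fin.last m).castSucc.succAbove k : Fin (m + 2)) : ℕ) = if (k : ℕ) = m then m + 1 else k := by
  have := k.2
  simp only [Fin.succAbove, Fin.lt_def, Fin.val_castSucc, Fin.val_last]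
  split_ifs <;> simp <;> omega

/-- The Dodgson condensation identity for two-bordered Toeplitz determinants
(equation (2.9) of the paper). -/
theorem dodgson_two_bordered
    (φ ψ₁ ψ₂ : ℂ → ℂ) (hφ : CircleIntegrable φ 0 1) (hψ₁ : CircleIntegrable ψ₁ 0 1)
    (hψ₂ : CircleIntegrable ψ₂ 0 1) (n : ℕ) (hn : 3 ≤ n) :
    twoBorderedDet φ ψ₁ ψ₂ n * toeplitzDet (fun z => z * φ z) (n - 2)
      = borderedDet φ (fun z => ψ₁ z / z) (n - 1)
          * borderedDet (fun z => z * φ z) ψ₂ (n - 1)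
        - borderedDet φ (fun z => ψ₂ z / z) (n - 1)
          * borderedDet (fun z => z * φ z) ψ₁ (n - 1) := by
  obtain ⟨m, rfl⟩ : ∃ m, n = m + 2 := ⟨n - 2, by omega⟩
  have key := desnanot_jacobi (Matrix.of fun j k : Fin (m + 2) =>
    if (k : ℕ) = m + 2 - 1 then fc ψ₂ (((m + 2 : ℕ) : ℤ) - 1 - (j : ℤ))
    else if (k : ℕ) = m + 2 - 2 then fc ψ₁ (((m + 2 : ℕ) : ℤ) - 1 - (j : ℤ))
    else fc φ ((k : ℤ) - (j : ℤ)))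
  unfold twoBorderedDet toeplitzDet borderedDet
  simp only [fc_mul_id, fc_div_id]
  -- The Toeplitz determinant has entries indexed by row minus column, the bordered ones by
  -- column minus row.
  rw [← Matrix.det_transpose (Matrix.of fun j k : Fin (m + 2 - 2) => _)]
  convert key using 2
  · congr 1
    ext i k
    have := k.2
    simp only [Matrix.transpose_apply, Matrix.submatrix_apply, Matrix.of_apply, Fin.val_castSucc,
      Fin.val_succ]
    rw [if_neg (by omega), if_neg (by omega)]
    congr 1
    push_cast
    ring
  all_goals
    refine congrArg₂ (· * ·) (congrArg Matrix.det ?_) (congrArg Matrix.det ?_)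
  all_goals
    ext i k
    have := k.2
    simp only [Matrix.submatrix_apply, Matrix.of_apply, Fin.val_castSucc, Fin.val_succ,
      val_succAbove_castSucc_last]
    split_ifs <;> first | omega | rfl | (congr 1; omega)
end
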